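/- Define the uncentered truncated mean estimator μ̂_n := (1/n)·Σ_{m=1}^n Trunc(λ·X_m)·X_m. Then for every δ ∈ (0,1] and λ > 0, with probability at least 1 − δ, simultaneously for all n ≥ 1: ‖μ̂_n − μ‖ ≤ 2·v·λ^{p−1}·(β·𝔠_p + K_p·2^{p−1}) + β·log(2/δ)/(λ·n). -/

import Mathlib

open MeasureTheory
open scoped Classical

/-- `truncB x = min(1, ‖x‖)/‖x‖` for `x ≠ 0`, and `truncB 0 = 1`; so `truncB x • x` is the
projection of `x` onto the closed unit ball. -/
noncomputable def truncB {B : Type*} [NormedAddCommGroup B] (x : B) : ℝ :=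
  if x = 0 then 1 else min 1 ‖x‖ / ‖x‖

/-- `K_p = (1/p) ((p-1)/p)^{p-1}`. -/
noncomputable def Kp (p : ℝ) : ℝ := (1 / p) * ((p - 1) / p) ^ (p - 1)

/-- `𝔠_p(ρ) = 2^{p+1} (e^{2ρ} - 2ρ - 1)/(2ρ)²`. -/
noncomputable def frakC (p ρ : ℝ) : ℝ :=
  2 ^ (p + 1) * (Real.exp (2 * ρ) - 2 * ρ - 1) / (2 * ρ) ^ 2

/-!
In a 2-smooth space iterating the smoothness inequality along halved increments gives
`‖s + z‖² ≤ ‖s‖² + 2 J z + β²‖z‖²` for the duality map `J` at `s`. As `u ↦ cosh √u` is convex, this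
quadratic bound turns into one for `cosh (‖s + z‖ / β)` that is linear in `z` up to a multiple of
`cosh (‖s‖ / β) ‖z‖²`. Hence, for a martingale `S` with bounded increments and bounded conditional
second moments, `exp (-n c) cosh (‖S n‖ / β)` is a supermartingale for some constant `c`, and
Ville's inequality bounds all `‖S n‖` simultaneously by a line.

This is applied to the sums of `clip (λ X m)` minus their conditional means. The increments are
bounded by `2` and have conditional second moments at most `4 λ^p v`, since
`‖clip x‖² ≤ ‖x‖^p` for `p ≤ 2`. The conditional mean of `clip (λ X m)` is within `K_p λ^p v` of
`λ μ`, because `t - 1 ≤ K_p t^p`.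
-/

open Filter Topology

section Duality

variable {B : Type*} [NormedAddCommGroup B] [NormedSpace ℝ B]

lemma exists_norm_le_apply_self_eq_norm_sq (s : B) :
    ∃ J : StrongDual ℝ B, ‖J‖ ≤ ‖s‖ ∧ J s = ‖s‖ ^ 2 := by
  obtain ⟨l, hl, hls⟩ := exists_dual_vector'' ℝ s
  refine ⟨‖s‖ • l, ?_, ?_⟩
  · rw [norm_smul, norm_norm]
    exact mul_le_of_le_one_right (norm_nonneg s) hl
  · simp [hls, sq]

/-- A selection of the normalized duality map: a functional `J` with `‖J‖ ≤ ‖s‖` and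
`J s = ‖s‖ ^ 2`. In a 2-smooth space it is half the derivative of `‖·‖ ^ 2` at `s`. -/
noncomputable def dualityMap (s : B) : StrongDual ℝ B :=
  (exists_norm_le_apply_self_eq_norm_sq s).choose

lemma norm_dualityMap_le (s : B) : ‖dualityMap s‖ ≤ ‖s‖ :=
  (exists_norm_le_apply_self_eq_norm_sq s).choose_spec.1

lemma dualityMap_self (s : B) : dualityMap s s = ‖s‖ ^ 2 :=
  (exists_norm_le_apply_self_eq_norm_sq s).choose_spec.2

lemma abs_dualityMap_apply_le (s z : B) : |dualityMap s z| ≤ ‖s‖ * ‖z‖ :=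
  (dualityMap s).le_of_opNorm_le (norm_dualityMap_le s) z

lemma two_mul_dualityMap_apply_le (s z : B) : 2 * dualityMap s z ≤ ‖s‖ ^ 2 + ‖z‖ ^ 2 := by
  linarith [le_of_abs_le (abs_dualityMap_apply_le s z), two_mul_le_add_sq ‖s‖ ‖z‖]

variable {β : ℝ}

variable (B β) in
/-- `(2, β)`-smoothness of the norm of `B`, the property that makes `norm_add_sq_le` available. -/
def IsTwoSmooth : Prop :=
  ∀ x y : B, ‖x + y‖ ^ 2 + ‖x - y‖ ^ 2 ≤ 2 * ‖x‖ ^ 2 + 2 * β ^ 2 * ‖y‖ ^ 2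

namespace IsTwoSmooth

lemma norm_add_sq_le_of_forall_norm_add_sq_le (h : IsTwoSmooth B β) {s : B}
    {l : StrongDual ℝ B} {c : ℝ}
    (hl : ∀ z, ‖s + z‖ ^ 2 ≤ ‖s‖ ^ 2 + 2 * l z + (1 + c) * β ^ 2 * ‖z‖ ^ 2) (z : B) :
    ‖s + z‖ ^ 2 ≤ ‖s‖ ^ 2 + 2 * l z + (1 + c / 2) * β ^ 2 * ‖z‖ ^ 2 := by
  have hhalf := hl ((1 / 2 : ℝ) • z)
  have hsmooth := h (s + (1 / 2 : ℝ) • z) ((1 / 2 : ℝ) • z)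
  rw [add_sub_cancel_right, add_assoc, ← add_smul, add_halves, one_smul] at hsmooth
  have hnorm : ‖(1 / 2 : ℝ) • z‖ = ‖z‖ / 2 := by
    rw [norm_smul, Real.norm_of_nonneg (by norm_num)]; ring
  rw [hnorm, map_smul, smul_eq_mul] at hhalf
  rw [hnorm] at hsmooth
  linear_combination hsmooth + 2 * hhalf

lemma norm_add_sq_le_add_half_pow (h : IsTwoSmooth B β) (k : ℕ) (s z : B) :
    ‖s + z‖ ^ 2 ≤ ‖s‖ ^ 2 + 2 * dualityMap s z + (1 + (1 / 2) ^ k) * β ^ 2 * ‖z‖ ^ 2 := by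
  induction k generalizing z with
  | zero =>
    have hsub := two_mul_dualityMap_apply_le s (s - z)
    rw [map_sub, dualityMap_self] at hsub
    linarith [h s z]
  | succ k ih =>
    rw [pow_succ (1 / 2 : ℝ), mul_one_div]
    exact h.norm_add_sq_le_of_forall_norm_add_sq_le ih z

lemma norm_add_sq_le (h : IsTwoSmooth B β) (s z : B) :
    ‖s + z‖ ^ 2 ≤ ‖s‖ ^ 2 + 2 * dualityMap s z + β ^ 2 * ‖z‖ ^ 2 := by
  have hpow : Tendsto (fun k : ℕ ↦ (1 / 2 : ℝ) ^ k) atTop (𝓝 0) :=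
    tendsto_pow_atTop_nhds_zero_of_lt_one (by norm_num) (by norm_num)
  have hlim : Tendsto (fun k : ℕ ↦ ‖s‖ ^ 2 + 2 * dualityMap s z +
      (1 + (1 / 2 : ℝ) ^ k) * β ^ 2 * ‖z‖ ^ 2) atTop
      (𝓝 (‖s‖ ^ 2 + 2 * dualityMap s z + (1 + 0) * β ^ 2 * ‖z‖ ^ 2)) :=
    tendsto_const_nhds.add (((tendsto_const_nhds.add hpow).mul_const _).mul_const _)
  simpa using ge_of_tendsto' hlim fun k ↦ h.norm_add_sq_le_add_half_pow k s z

lemma two_mul_dualityMap_sub_apply_le (h : IsTwoSmooth B β) (s t z : B) :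
    2 * (dualityMap s - dualityMap t) z ≤ β ^ 2 * (‖s - t‖ ^ 2 + ‖z‖ ^ 2) := by
  have hupper_t := h.norm_add_sq_le t z
  have hlower_t := two_mul_dualityMap_apply_le s (t + z)
  have hupper_s := h.norm_add_sq_le s (t - s)
  rw [add_sub_cancel, map_sub, dualityMap_self, norm_sub_rev] at hupper_s
  rw [map_add] at hlower_t
  rw [sub_apply]
  linarith

lemma norm_dualityMap_sub_le (h : IsTwoSmooth B β) (s t : B) :
    ‖dualityMap s - dualityMap t‖ ≤ β ^ 2 * ‖s - t‖ := by
  rcases eq_or_ne s t with rfl | hst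
  · simp
  have hpos : 0 < ‖s - t‖ := norm_sub_pos_iff.mpr hst
  have hunit : ∀ z : B, ‖z‖ = 1 → (dualityMap s - dualityMap t) z ≤ β ^ 2 * ‖s - t‖ := by
    intro z hz
    have hscaled := h.two_mul_dualityMap_sub_apply_le s t (‖s - t‖ • z)
    rw [map_smul, norm_smul, norm_norm, hz, smul_eq_mul] at hscaled
    exact le_of_mul_le_mul_left (by linarith) hpos
  refine ContinuousLinearMap.opNorm_le_of_unit_norm (by positivity) fun z hz ↦ ?_
  exact abs_le'.mpr ⟨hunit z hz, by
    simpa only [map_neg, norm_neg] using hunit (-z) (by rwa [norm_neg])⟩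

lemma continuous_dualityMap (h : IsTwoSmooth B β) : Continuous (dualityMap : B → StrongDual ℝ B) :=
  LipschitzWith.continuous (K := Real.toNNReal (β ^ 2)) <| .of_dist_le_mul fun s t ↦ by
    rw [Real.coe_toNNReal _ (sq_nonneg β), dist_eq_norm, dist_eq_norm]
    exact h.norm_dualityMap_sub_le s t

end IsTwoSmooth

end Duality

section Cosh

lemma convexOn_cosh_sqrt : ConvexOn ℝ (Set.Ici 0) fun u ↦ Real.cosh √u := by
  have hseries : ∀ u : ℝ, 0 ≤ u →
      HasSum (fun n : ℕ ↦ u ^ n / ((2 * n).factorial : ℝ)) (Real.cosh √u) := fun u hu ↦ by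
    simpa only [pow_mul, Real.sq_sqrt hu] using Real.hasSum_cosh √u
  refine ⟨convex_Ici 0, fun u hu v hv a b ha hb hab ↦ ?_⟩
  refine hasSum_le (fun n ↦ ?_) (hseries _ (convex_Ici 0 hu hv ha hb hab))
    (((hseries u hu).mul_left a).add ((hseries v hv).mul_left b))
  calc (a • u + b • v) ^ n / ((2 * n).factorial : ℝ)
      ≤ (a * u ^ n + b * v ^ n) / ((2 * n).factorial : ℝ) := by
        gcongr
        exact (convexOn_pow n).2 hu hv ha hb hab
    _ = a * (u ^ n / ((2 * n).factorial : ℝ)) + b * (v ^ n / ((2 * n).factorial : ℝ)) := by ring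

lemma cosh_le_of_sq_le_convexComb {a b q x y : ℝ} (ha : 0 ≤ a) (hb : 0 ≤ b) (hab : a + b = 1)
    (hq : q ^ 2 ≤ a * x ^ 2 + b * y ^ 2) :
    Real.cosh q ≤ a * Real.cosh x + b * Real.cosh y := by
  have hcosh_sqrt_sq : ∀ z : ℝ, Real.cosh √(z ^ 2) = Real.cosh z := fun z ↦ by
    rw [Real.sqrt_sq_eq_abs, Real.cosh_abs]
  have hconv := convexOn_cosh_sqrt.2 (sq_nonneg x) (sq_nonneg y) ha hb hab
  simp only [hcosh_sqrt_sq, smul_eq_mul] at hconv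
  refine le_trans ?_ hconv
  rw [← hcosh_sqrt_sq q, Real.cosh_le_cosh, abs_of_nonneg (Real.sqrt_nonneg _),
    abs_of_nonneg (Real.sqrt_nonneg _)]
  exact Real.sqrt_le_sqrt hq

lemma cosh_le_of_sq_le {r y q θ : ℝ} (hθ : |θ| ≤ 1) (hq : q ^ 2 ≤ r ^ 2 + 2 * θ * r * y + y ^ 2) :
    Real.cosh q ≤ Real.cosh r * Real.cosh y + θ * (Real.sinh r * Real.sinh y) := by
  obtain ⟨hθ_ge, hθ_le⟩ := abs_le.mp hθ
  have hconv := cosh_le_of_sq_le_convexComb (a := (1 + θ) / 2) (b := (1 - θ) / 2)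
    (x := r + y) (y := r - y) (by linarith) (by linarith) (by ring) (hq.trans_eq (by ring))
  rw [Real.cosh_add, Real.cosh_sub] at hconv
  linarith

lemma cosh_le_linear_add_of_sq_le {β r y q θ : ℝ} (hβ : 1 ≤ β) (hr : 0 ≤ r) (hy : 0 ≤ y)
    (hθ : |θ| ≤ 1 / β) (hq : q ^ 2 ≤ r ^ 2 + 2 * θ * r * y + y ^ 2) :
    Real.cosh q ≤ Real.cosh r + θ * y * Real.sinh r
      + (Real.cosh y - 1 + (Real.sinh y - y) / β) * Real.cosh r := by
  have hθ_one : |θ| ≤ 1 := hθ.trans ((div_le_one₀ (by linarith)).mpr hβ)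
  have hsinh_y : 0 ≤ Real.sinh y - y := sub_nonneg.mpr (Real.self_le_sinh_iff.mpr hy)
  have hremainder : θ * (Real.sinh r * (Real.sinh y - y))
      ≤ 1 / β * (Real.cosh r * (Real.sinh y - y)) := by
    have : 0 ≤ Real.sinh r := Real.sinh_nonneg_iff.mpr hr
    have := (Real.sinh_lt_cosh r).le
    have := (le_abs_self θ).trans hθ
    gcongr
  linear_combination cosh_le_of_sq_le hθ_one hq + hremainder

variable {t b : ℝ}

lemma cosh_mul_sub_one_le (ht0 : 0 ≤ t) (ht1 : t ≤ 1) :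
    Real.cosh (t * b) - 1 ≤ t ^ 2 * (Real.cosh b - 1) := by
  have hconv := cosh_le_of_sq_le_convexComb (q := t * b) (x := b) (y := 0) (sq_nonneg t)
    (sub_nonneg.mpr (pow_le_one₀ ht0 ht1)) (add_sub_cancel _ _) (by linarith)
  rw [Real.cosh_zero] at hconv
  linarith

lemma sinh_mul_sub_le (ht0 : 0 ≤ t) (ht1 : t ≤ 1) (hb : 0 ≤ b) :
    Real.sinh (t * b) - t * b ≤ t ^ 2 * (Real.sinh b - b) := by
  have hseries : ∀ x : ℝ, HasSum
      (fun n : ℕ ↦ x ^ (2 * (n + 1) + 1) / ((2 * (n + 1) + 1).factorial : ℝ)) (Real.sinh x - x) :=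
    fun x ↦ by simpa using (hasSum_nat_add_iff' 1).mpr (Real.hasSum_sinh x)
  refine hasSum_le (fun n ↦ ?_) (hseries (t * b)) ((hseries b).mul_left (t ^ 2))
  rw [mul_pow, mul_div_assoc]
  gcongr ?_ * _
  exact pow_le_pow_of_le_one ht0 ht1 (by omega)

/-- The best constant in `cosh y - 1 + (sinh y - y) / β ≤ coshRate β b * y ^ 2` for
`0 ≤ y ≤ b`: the left side divided by `y ^ 2` is increasing, and this is its value at `b`. -/
noncomputable def coshRate (β b : ℝ) : ℝ :=
  (Real.cosh b - 1 + (Real.sinh b - b) / β) / b ^ 2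

lemma cosh_sub_one_add_sinh_sub_div_le {β y : ℝ} (hβ : 0 ≤ β) (hb : 0 < b) (hy0 : 0 ≤ y)
    (hyb : y ≤ b) :
    Real.cosh y - 1 + (Real.sinh y - y) / β ≤ coshRate β b * y ^ 2 := by
  obtain ⟨t, rfl⟩ : ∃ t, y = t * b := ⟨y / b, (div_mul_cancel₀ y hb.ne').symm⟩
  have ht0 : 0 ≤ t := nonneg_of_mul_nonneg_left hy0 hb
  have ht1 : t ≤ 1 := (mul_le_iff_le_one_left hb).mp hyb
  calc Real.cosh (t * b) - 1 + (Real.sinh (t * b) - t * b) / β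
      ≤ t ^ 2 * (Real.cosh b - 1) + t ^ 2 * (Real.sinh b - b) / β := by
        gcongr
        · exact cosh_mul_sub_one_le ht0 ht1
        · exact sinh_mul_sub_le ht0 ht1 hb.le
    _ = coshRate β b * (t * b) ^ 2 := by
        rw [coshRate]; field_simp

lemma coshRate_nonneg {β : ℝ} (hβ : 0 ≤ β) (hb : 0 ≤ b) : 0 ≤ coshRate β b := by
  have := Real.one_le_cosh b
  have := Real.self_le_sinh_iff.mpr hb
  exact div_nonneg (add_nonneg (by linarith) (div_nonneg (by linarith) hβ)) (sq_nonneg b)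

lemma mul_coshRate_two_le {β : ℝ} (hβ : 0 < β) : β * coshRate β 2 * 4 ≤ 3 * β + 2 := by
  have hexp_two : Real.exp 2 < 7.5 := by
    rw [← one_add_one_eq_two, Real.exp_add]
    nlinarith [Real.exp_one_lt_d9, Real.exp_pos 1]
  have hexp_neg_two : Real.exp (-2) ≤ 1 / 2 := by
    linarith [Real.exp_le_exp.mpr (show (-2 : ℝ) ≤ -1 by norm_num), Real.exp_neg_one_lt_half]
  have hexpand : β * coshRate β 2 * 4 = β * (Real.cosh 2 - 1) + (Real.sinh 2 - 2) := by
    rw [coshRate]; field_simp; ring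
  have hcosh : Real.cosh 2 ≤ 4 := by rw [Real.cosh_eq]; linarith
  have hsinh : Real.sinh 2 ≤ 4 := (Real.sinh_lt_cosh 2).le.trans hcosh
  rw [hexpand]
  nlinarith

end Cosh

section CoshNorm

variable {B : Type*} [NormedAddCommGroup B] [NormedSpace ℝ B] {β : ℝ}

/-- The derivative of `cosh (‖·‖ / β)` at `s` in a 2-smooth space; the scalar factor has the
junk value `0` at `s = 0`, where the derivative vanishes anyway. -/
noncomputable def coshNormDeriv (β : ℝ) (s : B) : StrongDual ℝ B :=
  (Real.sinh (‖s‖ / β) / (β * ‖s‖)) • dualityMap s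

lemma norm_coshNormDeriv_le (hβ : 0 < β) (s : B) :
    ‖coshNormDeriv β s‖ ≤ Real.sinh (‖s‖ / β) / β := by
  have : 0 ≤ Real.sinh (‖s‖ / β) := Real.sinh_nonneg_iff.mpr (by positivity)
  calc ‖coshNormDeriv β s‖ ≤ Real.sinh (‖s‖ / β) / (β * ‖s‖) * ‖s‖ := by
        rw [coshNormDeriv, norm_smul, Real.norm_of_nonneg (by positivity)]
        gcongr
        exact norm_dualityMap_le s
    _ ≤ Real.sinh (‖s‖ / β) / β := by
        rw [div_mul_eq_mul_div]
        exact mul_div_mul_right_le (by positivity)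

lemma IsTwoSmooth.stronglyMeasurable_coshNormDeriv (h : IsTwoSmooth B β) {Ω : Type*}
    {m : MeasurableSpace Ω} {S : Ω → B} (hS : StronglyMeasurable S) :
    StronglyMeasurable fun ω ↦ coshNormDeriv β (S ω) := by
  have hfactor : StronglyMeasurable fun ω ↦ Real.sinh (‖S ω‖ / β) / (β * ‖S ω‖) :=
    ((Real.measurable_sinh.comp (hS.norm.measurable.div_const β)).div
      (hS.norm.measurable.const_mul β)).stronglyMeasurable
  exact hfactor.smul (h.continuous_dualityMap.comp_stronglyMeasurable hS)

lemma exists_mul_norm_mul_norm_eq_dualityMap_div (hβ : 0 ≤ β) (s z : B) :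
    ∃ θ : ℝ, |θ| ≤ 1 / β ∧ θ * ‖s‖ * ‖z‖ = dualityMap s z / β := by
  have hJ := abs_dualityMap_apply_le s z
  refine ⟨dualityMap s z / (‖s‖ * ‖z‖) / β, ?_, ?_⟩
  · rw [abs_div, abs_div, abs_of_nonneg hβ, abs_of_nonneg (a := ‖s‖ * ‖z‖) (by positivity)]
    gcongr
    exact div_le_one_of_le₀ hJ (by positivity)
  · have hcancel : dualityMap s z / (‖s‖ * ‖z‖) * (‖s‖ * ‖z‖) = dualityMap s z :=
      div_mul_cancel_of_imp fun h0 ↦ abs_nonpos_iff.mp (hJ.trans_eq h0)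
    linear_combination hcancel / β

lemma IsTwoSmooth.cosh_norm_add_div_le (h : IsTwoSmooth B β) (hβ : 1 ≤ β) {b : ℝ} (hb : 0 < b)
    (s : B) {z : B} (hz : ‖z‖ ≤ b) :
    Real.cosh (‖s + z‖ / β) ≤ Real.cosh (‖s‖ / β) + coshNormDeriv β s z
      + coshRate β b * Real.cosh (‖s‖ / β) * ‖z‖ ^ 2 := by
  have hβ0 : 0 < β := by linarith
  obtain ⟨θ, hθ, hθ_mul⟩ := exists_mul_norm_mul_norm_eq_dualityMap_div hβ0.le s z
  have hsq : (‖s + z‖ / β) ^ 2 ≤ (‖s‖ / β) ^ 2 + 2 * θ * (‖s‖ / β) * ‖z‖ + ‖z‖ ^ 2 := by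
    calc (‖s + z‖ / β) ^ 2
        ≤ (‖s‖ ^ 2 + 2 * dualityMap s z + β ^ 2 * ‖z‖ ^ 2) / β ^ 2 := by
          rw [div_pow]; gcongr; exact h.norm_add_sq_le s z
      _ = (‖s‖ / β) ^ 2 + 2 * (dualityMap s z / β) / β + ‖z‖ ^ 2 := by field_simp
      _ = (‖s‖ / β) ^ 2 + 2 * θ * (‖s‖ / β) * ‖z‖ + ‖z‖ ^ 2 := by rw [← hθ_mul]; ring
  have hlinear : θ * ‖z‖ * Real.sinh (‖s‖ / β) = coshNormDeriv β s z := by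
    rcases eq_or_ne s 0 with rfl | hs
    · simp [coshNormDeriv]
    · have hs_norm := norm_ne_zero_iff.mpr hs
      calc θ * ‖z‖ * Real.sinh (‖s‖ / β)
          = Real.sinh (‖s‖ / β) / ‖s‖ * (θ * ‖s‖ * ‖z‖) := by field_simp
        _ = Real.sinh (‖s‖ / β) / (β * ‖s‖) * dualityMap s z := by rw [hθ_mul]; ring
  have hcosh := cosh_le_linear_add_of_sq_le hβ (by positivity) (norm_nonneg z) hθ hsq
  have hrate := cosh_sub_one_add_sinh_sub_div_le hβ0.le hb (norm_nonneg z) hz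
  rw [hlinear] at hcosh
  linear_combination hcosh + mul_le_mul_of_nonneg_right hrate (Real.cosh_pos (‖s‖ / β)).le

end CoshNorm

section CondExp

variable {B : Type*} [NormedAddCommGroup B] {β C b V : ℝ}
  {Ω : Type*} {m mΩ : MeasurableSpace Ω} {P : Measure Ω} {S ξ : Ω → B}

section Integrability

variable [IsFiniteMeasure P]

lemma integrable_cosh_norm_div (hβ : 0 ≤ β) (hS : AEStronglyMeasurable S P)
    (hSC : ∀ᵐ ω ∂P, ‖S ω‖ ≤ C) : Integrable (fun ω ↦ Real.cosh (‖S ω‖ / β)) P := by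
  have hmeas : AEStronglyMeasurable (fun ω ↦ Real.cosh (‖S ω‖ / β)) P :=
    (Real.continuous_cosh.comp (continuous_norm.div_const β)).comp_aestronglyMeasurable hS
  refine .of_bound hmeas (Real.cosh (C / β)) ?_
  filter_upwards [hSC] with ω hω
  rw [Real.norm_of_nonneg (Real.cosh_pos _).le, Real.cosh_le_cosh]
  exact abs_le_abs_of_nonneg (by positivity) (by gcongr)

lemma integrable_norm_sq_of_norm_le (hξ : AEStronglyMeasurable ξ P)
    (hξb : ∀ᵐ ω ∂P, ‖ξ ω‖ ≤ b) : Integrable (fun ω ↦ ‖ξ ω‖ ^ 2) P := by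
  refine .of_bound (hξ.norm.pow 2) (b ^ 2) ?_
  filter_upwards [hξb] with ω hω
  rw [norm_pow, norm_norm]
  gcongr

lemma integrable_cosh_norm_div_mul_norm_sq (hβ : 0 ≤ β) (hS : AEStronglyMeasurable S P)
    (hSC : ∀ᵐ ω ∂P, ‖S ω‖ ≤ C) (hξ : AEStronglyMeasurable ξ P) (hξb : ∀ᵐ ω ∂P, ‖ξ ω‖ ≤ b) :
    Integrable (fun ω ↦ Real.cosh (‖S ω‖ / β) * ‖ξ ω‖ ^ 2) P := by
  refine (integrable_cosh_norm_div hβ hS hSC).mul_bdd (c := b ^ 2) (hξ.norm.pow 2) ?_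
  filter_upwards [hξb] with ω hω
  rw [norm_pow, norm_norm]
  gcongr

end Integrability

lemma condExp_add_add_smul_mul_of_stronglyMeasurable {F D Q : Ω → ℝ} (c : ℝ) (hm : m ≤ mΩ)
    [SigmaFinite (P.trim hm)] (hF_meas : StronglyMeasurable[m] F) (hF : Integrable F P)
    (hD : Integrable D P) (hD_mean : P[D | m] =ᵐ[P] 0) (hQ : Integrable Q P)
    (hFQ : Integrable (F * Q) P) :
    P[F + D + c • (F * Q) | m] =ᵐ[P] F + c • (F * P[Q | m]) := by
  calc P[F + D + c • (F * Q) | m]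
      =ᵐ[P] P[F | m] + P[D | m] + P[c • (F * Q) | m] :=
        (condExp_add (hF.add hD) (hFQ.smul c) m).trans ((condExp_add hF hD m).add .rfl)
    _ =ᵐ[P] F + 0 + c • (F * P[Q | m]) := by
        rw [condExp_of_stronglyMeasurable hm hF_meas hF]
        exact (EventuallyEq.rfl.add hD_mean).add ((condExp_smul c (F * Q) m).trans
          ((condExp_mul_of_stronglyMeasurable_left hF_meas hFQ hQ).const_smul c))
    _ = F + c • (F * P[Q | m]) := by rw [add_zero]

variable [NormedSpace ℝ B]

lemma IsTwoSmooth.integrable_coshNormDeriv_apply (h : IsTwoSmooth B β) (hβ : 0 < β) (hm : m ≤ mΩ)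
    (hS : StronglyMeasurable[m] S) (hSC : ∀ᵐ ω ∂P, ‖S ω‖ ≤ C) (hξ : Integrable ξ P) :
    Integrable (fun ω ↦ coshNormDeriv β (S ω) (ξ ω)) P := by
  refine (ContinuousLinearMap.id ℝ (StrongDual ℝ B)).integrable_of_bilin_of_bdd_left
    (Real.sinh (C / β) / β)
    ((h.stronglyMeasurable_coshNormDeriv hS).mono hm).aestronglyMeasurable ?_ hξ
  filter_upwards [hSC] with ω hω
  refine (norm_coshNormDeriv_le hβ (S ω)).trans ?_
  gcongr
  exact Real.sinh_le_sinh.mpr (by gcongr)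

lemma IsTwoSmooth.condExp_coshNormDeriv_apply [CompleteSpace B] (h : IsTwoSmooth B β) (hβ : 0 < β)
    (hm : m ≤ mΩ) (hS : StronglyMeasurable[m] S) (hSC : ∀ᵐ ω ∂P, ‖S ω‖ ≤ C)
    (hξ : Integrable ξ P) (hξ_mean : P[ξ | m] =ᵐ[P] 0) :
    P[fun ω ↦ coshNormDeriv β (S ω) (ξ ω) | m] =ᵐ[P] 0 := by
  have hpull := condExp_bilin_of_stronglyMeasurable_left
    (ContinuousLinearMap.id ℝ (StrongDual ℝ B)) (h.stronglyMeasurable_coshNormDeriv hS)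
    (h.integrable_coshNormDeriv_apply hβ hm hS hSC hξ) hξ
  filter_upwards [hpull, hξ_mean] with ω hω hω_mean
  exact hω.trans (by rw [hω_mean]; exact map_zero _)

lemma IsTwoSmooth.condExp_cosh_norm_add_div_le [CompleteSpace B] [IsFiniteMeasure P]
    (h : IsTwoSmooth B β) (hβ : 1 ≤ β) (hb : 0 < b)
    (hm : m ≤ mΩ) (hS : StronglyMeasurable[m] S) (hSC : ∀ᵐ ω ∂P, ‖S ω‖ ≤ C)
    (hξ : Integrable ξ P) (hξ_mean : P[ξ | m] =ᵐ[P] 0) (hξb : ∀ᵐ ω ∂P, ‖ξ ω‖ ≤ b)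
    (hξV : ∀ᵐ ω ∂P, (P[fun ω ↦ ‖ξ ω‖ ^ 2 | m]) ω ≤ V) :
    P[fun ω ↦ Real.cosh (‖S ω + ξ ω‖ / β) | m]
      ≤ᵐ[P] fun ω ↦ Real.exp (coshRate β b * V) * Real.cosh (‖S ω‖ / β) := by
  have hβ0 : 0 < β := by linarith
  set F : Ω → ℝ := fun ω ↦ Real.cosh (‖S ω‖ / β)
  set D : Ω → ℝ := fun ω ↦ coshNormDeriv β (S ω) (ξ ω)
  set Q : Ω → ℝ := fun ω ↦ ‖ξ ω‖ ^ 2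
  have hF_meas : StronglyMeasurable[m] F :=
    (Real.continuous_cosh.comp (continuous_norm.div_const β)).comp_stronglyMeasurable hS
  have hF : Integrable F P :=
    integrable_cosh_norm_div hβ0.le (hS.mono hm).aestronglyMeasurable hSC
  have hD : Integrable D P := h.integrable_coshNormDeriv_apply hβ0 hm hS hSC hξ
  have hQ : Integrable Q P := integrable_norm_sq_of_norm_le hξ.1 hξb
  have hFQ : Integrable (F * Q) P :=
    integrable_cosh_norm_div_mul_norm_sq hβ0.le (hS.mono hm).aestronglyMeasurable hSC hξ.1 hξb
  have hcosh : Integrable (fun ω ↦ Real.cosh (‖S ω + ξ ω‖ / β)) P := by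
    refine integrable_cosh_norm_div (C := C + b) hβ0.le
      ((hS.mono hm).aestronglyMeasurable.add hξ.1) ?_
    filter_upwards [hSC, hξb] with ω hSω hξω
    exact (norm_add_le _ _).trans (add_le_add hSω hξω)
  have hpointwise : (fun ω ↦ Real.cosh (‖S ω + ξ ω‖ / β))
      ≤ᵐ[P] F + D + coshRate β b • (F * Q) := by
    filter_upwards [hξb] with ω hω
    simpa only [Pi.add_apply, Pi.smul_apply, Pi.mul_apply, smul_eq_mul, mul_assoc]
      using h.cosh_norm_add_div_le hβ hb (S ω) hω
  filter_upwards [condExp_mono (m := m) hcosh ((hF.add hD).add (hFQ.smul (coshRate β b)))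
      hpointwise, condExp_add_add_smul_mul_of_stronglyMeasurable (coshRate β b) hm hF_meas hF hD
      (h.condExp_coshNormDeriv_apply hβ0 hm hS hSC hξ hξ_mean) hQ hFQ, hξV] with ω hle heq hV
  have hrate := coshRate_nonneg hβ0.le hb.le
  have : 0 < F ω := Real.cosh_pos _
  calc P[fun ω ↦ Real.cosh (‖S ω + ξ ω‖ / β) | m] ω
      ≤ F ω + coshRate β b * (F ω * P[Q | m] ω) := hle.trans_eq heq
    _ ≤ F ω + coshRate β b * (F ω * V) := by gcongr
    _ = (coshRate β b * V + 1) * F ω := by ring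
    _ ≤ Real.exp (coshRate β b * V) * F ω := by gcongr; exact Real.add_one_le_exp _

end CondExp

section Ville

variable {Ω : Type*} {mΩ : MeasurableSpace Ω} {P : Measure Ω} [IsFiniteMeasure P]
  {ℱ : Filtration ℕ mΩ} {M : ℕ → Ω → ℝ} {ε : ℝ}

lemma mul_measureReal_exists_le_le_integral_of_supermartingale (hM : Supermartingale M ℱ P)
    (hM0 : ∀ n ω, 0 ≤ M n ω) (hε : 0 ≤ ε) (N : ℕ) :
    ε * P.real {ω | ∃ n ≤ N, ε ≤ M n ω} ≤ ∫ ω, M 0 ω ∂P := by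
  set τ : Ω → ℕ∞ := fun ω ↦ (hittingBtwn M (Set.Ici ε) 0 N ω : ℕ)
  have hτ : IsStoppingTime ℱ τ :=
    hM.stronglyAdapted.adapted.isStoppingTime_hittingBtwn measurableSet_Ici
  have hτN : ∀ ω, τ ω ≤ N := fun ω ↦ Nat.cast_le.mpr (hittingBtwn_le ω)
  calc ε * P.real {ω | ∃ n ≤ N, ε ≤ M n ω}
      ≤ ε * P.real {ω | ε ≤ stoppedValue M τ ω} := by
        gcongr ε * ?_
        refine measureReal_mono fun ω ⟨n, hn, hMn⟩ ↦ ?_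
        exact stoppedValue_hittingBtwn_mem ⟨n, ⟨n.zero_le, hn⟩, hMn⟩
    _ ≤ ∫ ω, stoppedValue M τ ω ∂P :=
        mul_meas_ge_le_integral_of_nonneg (.of_forall fun ω ↦ hM0 _ ω)
          (integrable_stoppedValue ℕ hτ hM.2.2 hτN) ε
    _ ≤ ∫ ω, M 0 ω ∂P := by
        have hmono := hM.neg.expected_stoppedValue_mono (isStoppingTime_const ℱ 0) hτ
          (fun _ ↦ zero_le) hτN
        simpa [stoppedValue, integral_neg] using hmono

lemma mul_measureReal_exists_le_integral_of_supermartingale (hM : Supermartingale M ℱ P)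
    (hM0 : ∀ n ω, 0 ≤ M n ω) (hε : 0 ≤ ε) :
    ε * P.real {ω | ∃ n, ε ≤ M n ω} ≤ ∫ ω, M 0 ω ∂P := by
  have hmono : Monotone fun N : ℕ ↦ {ω | ∃ n ≤ N, ε ≤ M n ω} :=
    fun N N' hN ω ⟨n, hn, hMn⟩ ↦ ⟨n, hn.trans hN, hMn⟩
  have hunion : {ω | ∃ n, ε ≤ M n ω} = ⋃ N : ℕ, {ω | ∃ n ≤ N, ε ≤ M n ω} := by
    ext ω
    simp only [Set.mem_iUnion, Set.mem_ofPred_eq]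
    exact ⟨fun ⟨n, hMn⟩ ↦ ⟨n, n, le_rfl, hMn⟩, fun ⟨_, n, _, hMn⟩ ↦ ⟨n, hMn⟩⟩
  have hlim : Tendsto (fun N : ℕ ↦ P.real {ω | ∃ n ≤ N, ε ≤ M n ω}) atTop
      (𝓝 (P.real (⋃ N : ℕ, {ω | ∃ n ≤ N, ε ≤ M n ω}))) :=
    (ENNReal.tendsto_toReal (measure_ne_top _ _)).comp (tendsto_measure_iUnion_atTop hmono)
  rw [hunion]
  exact le_of_tendsto' (hlim.const_mul ε) fun N ↦
    mul_measureReal_exists_le_le_integral_of_supermartingale hM hM0 hε N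

end Ville

section LineCrossing

variable {B : Type*} [NormedAddCommGroup B] {Ω : Type*} {mΩ : MeasurableSpace Ω}
  {P : Measure Ω} {ℱ : Filtration ℕ mΩ} {S : ℕ → Ω → B} {β b V c δ : ℝ}

lemma ae_norm_le_nat_mul_of_norm_sub_le (hS0 : S 0 = 0)
    (hSb : ∀ n, ∀ᵐ ω ∂P, ‖S (n + 1) ω - S n ω‖ ≤ b) (n : ℕ) : ∀ᵐ ω ∂P, ‖S n ω‖ ≤ n * b := by
  filter_upwards [ae_all_iff.mpr hSb] with ω hω
  induction n with
  | zero => simp [hS0]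
  | succ n ih =>
    push_cast
    linarith [norm_le_norm_add_norm_sub' (S (n + 1) ω) (S n ω), hω n]

variable [NormedSpace ℝ B]

lemma IsTwoSmooth.supermartingale_exp_mul_cosh [CompleteSpace B] [IsFiniteMeasure P]
    (h : IsTwoSmooth B β) (hβ : 1 ≤ β) (hb : 0 < b) (hS : Martingale S ℱ P) (hS0 : S 0 = 0)
    (hSb : ∀ n, ∀ᵐ ω ∂P, ‖S (n + 1) ω - S n ω‖ ≤ b)
    (hSV : ∀ n, ∀ᵐ ω ∂P, (P[fun ω ↦ ‖S (n + 1) ω - S n ω‖ ^ 2 | ℱ n]) ω ≤ V) :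
    Supermartingale
      (fun (n : ℕ) ω ↦ Real.exp (-(n * (coshRate β b * V))) * Real.cosh (‖S n ω‖ / β)) ℱ P := by
  have hS_bdd := ae_norm_le_nat_mul_of_norm_sub_le hS0 hSb
  have hS_meas := hS.stronglyAdapted
  refine supermartingale_nat (fun n ↦ ?_) (fun n ↦ ?_) fun n ↦ ?_
  · exact ((Real.continuous_cosh.comp (continuous_norm.div_const β)).comp_stronglyMeasurable
      (hS_meas n)).const_mul _
  · exact (integrable_cosh_norm_div (by linarith) (hS.integrable n).1 (hS_bdd n)).const_mul _
  have hmean : P[fun ω ↦ S (n + 1) ω - S n ω | ℱ n] =ᵐ[P] 0 := by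
    filter_upwards [condExp_sub (hS.integrable (n + 1)) (hS.integrable n) (ℱ n),
      hS.condExp_ae_eq n.le_succ, hS.condExp_ae_eq (le_refl n)] with ω hsub hsucc hself
    exact hsub.trans (by rw [Pi.sub_apply, hsucc, hself, sub_self, Pi.zero_apply])
  filter_upwards [condExp_smul (Real.exp (-((n + 1 : ℕ) * (coshRate β b * V))))
      (fun ω ↦ Real.cosh (‖S (n + 1) ω‖ / β)) (ℱ n),
    h.condExp_cosh_norm_add_div_le hβ hb (ℱ.le n) (hS_meas n) (hS_bdd n)
      ((hS.integrable (n + 1)).sub (hS.integrable n)) hmean (hSb n) (hSV n)] with ω hsmul hstep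
  simp only [Pi.sub_apply, add_sub_cancel] at hstep
  refine hsmul.trans_le ((mul_le_mul_of_nonneg_left hstep (Real.exp_pos _).le).trans_eq ?_)
  rw [← mul_assoc, ← Real.exp_add]
  push_cast
  ring_nf

lemma one_div_le_exp_neg_mul_cosh {x : ℝ} (hδ : 0 < δ) (hx : c + Real.log (2 / δ) ≤ x) :
    1 / δ ≤ Real.exp (-c) * Real.cosh x := by
  have hcosh : Real.exp x / 2 ≤ Real.cosh x := by
    rw [Real.cosh_eq]
    linarith [Real.exp_pos (-x)]
  calc 1 / δ = Real.exp (-c) * (Real.exp (c + Real.log (2 / δ)) / 2) := by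
        rw [Real.exp_add, Real.exp_log (by positivity), ← mul_div_assoc, ← mul_assoc,
          ← Real.exp_add, neg_add_cancel, Real.exp_zero]
        ring
    _ ≤ Real.exp (-c) * (Real.exp x / 2) := by gcongr
    _ ≤ Real.exp (-c) * Real.cosh x := by gcongr

theorem IsTwoSmooth.ofReal_one_sub_le_measure_forall_norm_martingale_le [CompleteSpace B]
    [IsProbabilityMeasure P] (h : IsTwoSmooth B β) (hβ : 1 ≤ β) (hb : 0 < b)
    (hS : Martingale S ℱ P) (hS0 : S 0 = 0)
    (hSb : ∀ n, ∀ᵐ ω ∂P, ‖S (n + 1) ω - S n ω‖ ≤ b)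
    (hSV : ∀ n, ∀ᵐ ω ∂P, (P[fun ω ↦ ‖S (n + 1) ω - S n ω‖ ^ 2 | ℱ n]) ω ≤ V) (hδ : 0 < δ) :
    ENNReal.ofReal (1 - δ) ≤
      P {ω | ∀ n : ℕ, ‖S n ω‖ ≤ β * (n * (coshRate β b * V) + Real.log (2 / δ))} := by
  set M : ℕ → Ω → ℝ :=
    fun n ω ↦ Real.exp (-(n * (coshRate β b * V))) * Real.cosh (‖S n ω‖ / β)
  have hville : P.real {ω | ∃ n, 1 / δ ≤ M n ω} ≤ δ := by
    have hM0 : ∫ ω, M 0 ω ∂P = 1 := by simp [M, hS0]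
    have hle := mul_measureReal_exists_le_integral_of_supermartingale (ε := 1 / δ)
      (h.supermartingale_exp_mul_cosh hβ hb hS hS0 hSb hSV)
      (fun n ω ↦ mul_nonneg (Real.exp_pos _).le (Real.cosh_pos _).le) (by positivity)
    rwa [hM0, one_div_mul_eq_div, div_le_one₀ hδ] at hle
  set A : Set Ω := {ω | ∀ n : ℕ, ‖S n ω‖ ≤ β * (n * (coshRate β b * V) + Real.log (2 / δ))}
  have hcompl : Aᶜ ⊆ {ω | ∃ n, 1 / δ ≤ M n ω} := by
    intro ω hω
    obtain ⟨n, hn⟩ := not_forall.mp hω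
    have hn' := (lt_div_iff₀' (by linarith : 0 < β)).mpr (not_le.mp hn)
    exact ⟨n, one_div_le_exp_neg_mul_cosh hδ hn'.le⟩
  have huniv : 1 ≤ P.real A + P.real Aᶜ := by
    simpa only [Set.union_compl_self, probReal_univ] using measureReal_union_le (μ := P) A Aᶜ
  rw [← ofReal_measureReal]
  refine ENNReal.ofReal_le_ofReal ?_
  linarith [measureReal_mono (μ := P) hcompl]

end LineCrossing

section Constants

variable {p β : ℝ}

lemma Kp_nonneg (hp : 1 ≤ p) : 0 ≤ Kp p := by
  have : 0 ≤ p - 1 := by linarith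
  rw [Kp]
  positivity

-- Equality holds at `t = p / (p - 1)`, the point around which Bernoulli's inequality is applied.
lemma sub_one_le_Kp_mul_rpow {t : ℝ} (hp : 1 < p) (ht : 0 ≤ t) : t - 1 ≤ Kp p * t ^ p := by
  have hp0 : 0 < p := by linarith
  have hp1 : 0 < p - 1 := by linarith
  set r := (p - 1) / p with hr_def
  have hr : 0 < r := by positivity
  have hr_mul : r * p = p - 1 := div_mul_cancel₀ _ hp0.ne'
  have hbernoulli : (t - 1) * (p - 1) ≤ t ^ p * r ^ p := by
    have h := one_add_mul_self_le_rpow_one_add (s := t * r - 1)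
      (by linarith [mul_nonneg ht hr.le]) hp.le
    rw [add_sub_cancel, Real.mul_rpow ht hr.le] at h
    linear_combination h - t * hr_mul
  have hKp : Kp p * t ^ p * (p - 1) = t ^ p * r ^ p := by
    have hpow : r ^ p = r ^ (p - 1) * r := by rw [← Real.rpow_add_one hr.ne', sub_add_cancel]
    rw [Kp, ← hr_def, hpow, ← hr_mul]
    field_simp
  exact le_of_mul_le_mul_right (hbernoulli.trans_eq hKp.symm) hp1

lemma half_add_div_six_le_exp_sub_div_sq {u : ℝ} (hu : 0 < u) :
    1 / 2 + u / 6 ≤ (Real.exp u - u - 1) / u ^ 2 := by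
  have hexp := Real.sum_le_exp_of_nonneg hu.le 4
  norm_num [Finset.sum_range_succ, Nat.factorial] at hexp
  rw [le_div_iff₀ (by positivity)]
  linarith

lemma three_mul_add_two_le_two_mul_mul_frakC (hp : 1 ≤ p) (hβ : 0 < β) :
    3 * β + 2 ≤ 2 * (β * frakC p (1 / β)) := by
  have hpow : (4 : ℝ) ≤ 2 ^ (p + 1) := by
    calc (4 : ℝ) = 2 ^ (2 : ℝ) := by norm_num
      _ ≤ 2 ^ (p + 1) := Real.rpow_le_rpow_of_exponent_le one_le_two (by linarith)
  have hexp := half_add_div_six_le_exp_sub_div_sq (u := 2 * (1 / β)) (by positivity)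
  calc 3 * β + 2 ≤ 2 * (β * (4 * (1 / 2 + 2 * (1 / β) / 6))) := by
        field_simp
        linarith
    _ ≤ 2 * (β * (2 ^ (p + 1) * ((Real.exp (2 * (1 / β)) - 2 * (1 / β) - 1)
          / (2 * (1 / β)) ^ 2))) := by gcongr
    _ = 2 * (β * frakC p (1 / β)) := by rw [frakC, mul_div_assoc]

lemma three_mul_add_two_add_Kp_le (hp : 1 ≤ p) (hβ : 0 < β) :
    3 * β + 2 + Kp p ≤ 2 * (β * frakC p (1 / β) + Kp p * 2 ^ (p - 1)) := by
  have hpow : (1 : ℝ) ≤ 2 ^ (p - 1) := Real.one_le_rpow one_le_two (by linarith)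
  have hKp := Kp_nonneg hp
  nlinarith [three_mul_add_two_le_two_mul_mul_frakC hp hβ]

end Constants

section Clip

variable {B : Type*} [NormedAddCommGroup B] {p : ℝ}

lemma truncB_eq_inv_max (x : B) : truncB x = (max 1 ‖x‖)⁻¹ := by
  unfold truncB
  split_ifs with hx
  · simp [hx]
  · have hx_norm := norm_ne_zero_iff.mpr hx
    rcases le_total ‖x‖ 1 with h | h
    · rw [min_eq_right h, max_eq_left h, div_self hx_norm, inv_one]
    · rw [min_eq_left h, max_eq_right h, one_div]

variable [NormedSpace ℝ B]

/-- The radial projection of `x` onto the closed unit ball; `clip (λ • x)` is `λ` times the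
summand `Trunc(λx)x` of the truncated mean. -/
noncomputable def clip (x : B) : B := truncB x • x

lemma continuous_clip : Continuous (clip : B → B) := by
  have hclip : (clip : B → B) = fun x ↦ (max 1 ‖x‖)⁻¹ • x := by
    ext x; rw [clip, truncB_eq_inv_max]
  rw [hclip]
  exact ((continuous_const.max continuous_norm).inv₀
    fun x ↦ (lt_max_of_lt_left one_pos).ne').smul continuous_id

lemma clip_of_norm_le_one {x : B} (hx : ‖x‖ ≤ 1) : clip x = x := by
  rw [clip, truncB_eq_inv_max, max_eq_left hx, inv_one, one_smul]

lemma clip_of_one_le_norm {x : B} (hx : 1 ≤ ‖x‖) : clip x = ‖x‖⁻¹ • x := by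
  rw [clip, truncB_eq_inv_max, max_eq_right hx]

lemma norm_clip (x : B) : ‖clip x‖ = min ‖x‖ 1 := by
  rcases le_total ‖x‖ 1 with hx | hx
  · rw [clip_of_norm_le_one hx, min_eq_left hx]
  · rw [clip_of_one_le_norm hx, norm_smul, norm_inv, norm_norm,
      inv_mul_cancel₀ (one_pos.trans_le hx).ne', min_eq_right hx]

lemma norm_clip_le_one (x : B) : ‖clip x‖ ≤ 1 :=
  (norm_clip x).trans_le (min_le_right _ _)

lemma norm_clip_sq_le_rpow (hp0 : 0 ≤ p) (hp2 : p ≤ 2) (x : B) : ‖clip x‖ ^ 2 ≤ ‖x‖ ^ p := by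
  rw [norm_clip]
  rcases le_total ‖x‖ 1 with hx | hx
  · rw [min_eq_left hx, ← Real.rpow_two]
    exact Real.rpow_le_rpow_of_exponent_ge' (norm_nonneg x) hx hp0 hp2
  · rw [min_eq_right hx, one_pow]
    exact Real.one_le_rpow hx hp0

lemma norm_clip_sub_self_le (hp : 1 < p) (x : B) : ‖clip x - x‖ ≤ Kp p * ‖x‖ ^ p := by
  rcases le_total ‖x‖ 1 with hx | hx
  · rw [clip_of_norm_le_one hx, sub_self, norm_zero]
    exact mul_nonneg (Kp_nonneg hp.le) (by positivity)
  · have hclip : clip x - x = (‖x‖⁻¹ - 1) • x := by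
      rw [clip_of_one_le_norm hx, sub_smul, one_smul]
    calc ‖clip x - x‖ = ‖x‖ - 1 := by
          rw [hclip, norm_smul, Real.norm_of_nonpos (by linarith [inv_le_one_of_one_le₀ hx]),
            neg_sub, sub_mul, one_mul, inv_mul_cancel₀ (one_pos.trans_le hx).ne']
      _ ≤ Kp p * ‖x‖ ^ p := sub_one_le_Kp_mul_rpow hp (norm_nonneg x)

variable {Ω : Type*} {m mΩ : MeasurableSpace Ω} {P : Measure Ω} {W : Ω → B} {V : ℝ}

lemma integrable_clip [IsFiniteMeasure P] (hW : AEStronglyMeasurable W P) :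
    Integrable (fun ω ↦ clip (W ω)) P :=
  .of_bound (continuous_clip.comp_aestronglyMeasurable hW) 1
    (.of_forall fun ω ↦ norm_clip_le_one (W ω))

variable [CompleteSpace B]

lemma norm_clip_sub_condExp_clip_le :
    ∀ᵐ ω ∂P, ‖clip (W ω) - P[fun ω ↦ clip (W ω) | m] ω‖ ≤ 2 := by
  filter_upwards [ae_bdd_norm_condExp_of_ae_bdd_norm (m := m) (μ := P)
    (.of_forall fun ω ↦ norm_clip_le_one (W ω))] with ω hω
  linarith [norm_sub_le (clip (W ω)) (P[fun ω ↦ clip (W ω) | m] ω), norm_clip_le_one (W ω)]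

variable [IsFiniteMeasure P]

lemma norm_condExp_clip_sub_condExp_le (hp : 1 < p) (hW : Integrable W P)
    (hWp : Integrable (fun ω ↦ ‖W ω‖ ^ p) P)
    (hV : ∀ᵐ ω ∂P, (P[fun ω ↦ ‖W ω‖ ^ p | m]) ω ≤ V) :
    ∀ᵐ ω ∂P, ‖P[fun ω ↦ clip (W ω) | m] ω - P[W | m] ω‖ ≤ Kp p * V := by
  have hclip := integrable_clip hW.1
  filter_upwards [condExp_sub hclip hW m,
    norm_condExp_le (m := m) (μ := P) ((fun ω ↦ clip (W ω)) - W),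
    condExp_mono (m := m) (hclip.sub hW).norm (hWp.smul (Kp p))
      (.of_forall fun ω ↦ norm_clip_sub_self_le hp (W ω)),
    condExp_smul (Kp p) (fun ω ↦ ‖W ω‖ ^ p) m, hV] with ω hsub hnorm hmono hsmul hVω
  calc ‖P[fun ω ↦ clip (W ω) | m] ω - P[W | m] ω‖
      = ‖P[(fun ω ↦ clip (W ω)) - W | m] ω‖ := by rw [hsub, Pi.sub_apply]
    _ ≤ P[Kp p • fun ω ↦ ‖W ω‖ ^ p | m] ω := hnorm.trans hmono
    _ = Kp p * P[fun ω ↦ ‖W ω‖ ^ p | m] ω := hsmul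
    _ ≤ Kp p * V := mul_le_mul_of_nonneg_left hVω (Kp_nonneg hp.le)

lemma norm_condExp_clip_sq_le (hp0 : 0 ≤ p) (hp2 : p ≤ 2)
    (hW : AEStronglyMeasurable W P) (hWp : Integrable (fun ω ↦ ‖W ω‖ ^ p) P)
    (hV : ∀ᵐ ω ∂P, (P[fun ω ↦ ‖W ω‖ ^ p | m]) ω ≤ V) :
    ∀ᵐ ω ∂P, ‖P[fun ω ↦ clip (W ω) | m] ω‖ ^ 2 ≤ V := by
  have hsq : Integrable (fun ω ↦ ‖clip (W ω)‖ ^ (2 : ℝ)) P := by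
    simpa only [Real.rpow_two] using integrable_norm_sq_of_norm_le (integrable_clip hW).1
      (.of_forall fun ω ↦ norm_clip_le_one (W ω))
  have hmono := condExp_mono (m := m) hsq hWp (.of_forall fun ω ↦ by
    simpa only [Real.rpow_two] using norm_clip_sq_le_rpow hp0 hp2 (W ω))
  filter_upwards [Integrable.norm_condExp_rpow_le (m := m) one_le_two hsq, hmono, hV]
    with ω hjensen hle hVω
  rw [← Real.rpow_two]
  exact hjensen.trans (hle.trans hVω)

lemma condExp_norm_clip_sub_condExp_sq_le (hm : m ≤ mΩ) (hp0 : 0 ≤ p) (hp2 : p ≤ 2)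
    (hW : AEStronglyMeasurable W P) (hWp : Integrable (fun ω ↦ ‖W ω‖ ^ p) P)
    (hV : ∀ᵐ ω ∂P, (P[fun ω ↦ ‖W ω‖ ^ p | m]) ω ≤ V) :
    ∀ᵐ ω ∂P, P[fun ω ↦ ‖clip (W ω) - P[fun ω ↦ clip (W ω) | m] ω‖ ^ 2 | m] ω ≤ 4 * V := by
  set c := P[fun ω ↦ clip (W ω) | m]
  have hclip := integrable_clip hW
  have hsq : Integrable (fun ω ↦ ‖clip (W ω) - c ω‖ ^ 2) P :=
    integrable_norm_sq_of_norm_le (hclip.sub integrable_condExp).1 norm_clip_sub_condExp_clip_le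
  have hle : ∀ᵐ ω ∂P, ‖clip (W ω) - c ω‖ ^ 2 ≤ 2 * ‖W ω‖ ^ p + 2 * V := by
    filter_upwards [norm_condExp_clip_sq_le hp0 hp2 hW hWp hV] with ω hω
    calc ‖clip (W ω) - c ω‖ ^ 2 ≤ (‖clip (W ω)‖ + ‖c ω‖) ^ 2 := by
          gcongr
          exact norm_sub_le _ _
      _ ≤ 2 * (‖clip (W ω)‖ ^ 2 + ‖c ω‖ ^ 2) := add_sq_le
      _ ≤ 2 * ‖W ω‖ ^ p + 2 * V := by linarith [norm_clip_sq_le_rpow hp0 hp2 (W ω)]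
  have hconst : P[fun _ ↦ 2 * V | m] = fun _ ↦ 2 * V := condExp_const hm _
  filter_upwards [condExp_mono (m := m) hsq ((hWp.smul (2 : ℝ)).add (integrable_const _)) hle,
    condExp_add (hWp.smul (2 : ℝ)) (integrable_const (2 * V)) m,
    condExp_smul (2 : ℝ) (fun ω ↦ ‖W ω‖ ^ p) m, hV] with ω hmono hadd hsmul hVω
  refine hmono.trans (hadd.trans_le ?_)
  rw [Pi.add_apply, hsmul, hconst, Pi.smul_apply, smul_eq_mul]
  linarith

end Clip

section ClipSum

variable {B : Type*} [NormedAddCommGroup B] [NormedSpace ℝ B] {Ω : Type*}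

/-- The partial sums `∑ m < n, clip (Y m)` of the projections of a process onto the unit ball; for
`Y m = λ • X (m + 1)` this is `λ n` times the truncated mean. -/
noncomputable def clipSum (Y : ℕ → Ω → B) (n : ℕ) (ω : Ω) : B :=
  ∑ m ∈ Finset.range n, clip (Y m ω)

variable {mΩ : MeasurableSpace Ω} {P : Measure Ω} {ℱ : Filtration ℕ mΩ} {Y : ℕ → Ω → B}

lemma clipSum_zero : clipSum Y 0 = 0 :=
  funext fun _ ↦ Finset.sum_range_zero _

lemma clipSum_succ_sub (n : ℕ) : clipSum Y (n + 1) - clipSum Y n = fun ω ↦ clip (Y n ω) :=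
  funext fun _ ↦ Finset.sum_range_succ_sub_sum _

lemma stronglyAdapted_clipSum (hY : ∀ n, StronglyMeasurable[ℱ (n + 1)] (Y n)) :
    StronglyAdapted ℱ (clipSum Y) := fun _ ↦
  Finset.stronglyMeasurable_fun_sum _ fun _ hm ↦ continuous_clip.comp_stronglyMeasurable
    ((hY _).mono (ℱ.mono (Finset.mem_range.mp hm)))

lemma integrable_clipSum [IsFiniteMeasure P] (hY : ∀ n, AEStronglyMeasurable (Y n) P) (n : ℕ) :
    Integrable (clipSum Y n) P :=
  integrable_finsetSum _ fun m _ ↦ integrable_clip (hY m)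

lemma martingalePart_clipSum_zero : martingalePart (clipSum Y) ℱ P 0 = 0 := by
  rw [martingalePart_zero, clipSum_zero]

lemma martingalePart_clipSum_succ_sub (n : ℕ) (ω : Ω) :
    martingalePart (clipSum Y) ℱ P (n + 1) ω - martingalePart (clipSum Y) ℱ P n ω =
      clip (Y n ω) - P[fun ω ↦ clip (Y n ω) | ℱ n] ω := by
  have hsub := congrFun (clipSum_succ_sub (Y := Y) n) ω
  simp only [martingalePart, predictablePart_add_one, clipSum_succ_sub, Pi.sub_apply,
    Pi.add_apply] at hsub ⊢
  rw [← hsub]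
  abel

variable [CompleteSpace B] {μ : B} {p V : ℝ}

lemma norm_predictablePart_clipSum_sub_le [IsFiniteMeasure P] (hp : 1 < p)
    (hint : ∀ n, Integrable (Y n) P) (hmom : ∀ n, Integrable (fun ω ↦ ‖Y n ω‖ ^ p) P)
    (hmean : ∀ n, P[Y n | ℱ n] =ᵐ[P] fun _ ↦ μ)
    (hV : ∀ n, ∀ᵐ ω ∂P, (P[fun ω ↦ ‖Y n ω‖ ^ p | ℱ n]) ω ≤ V) :
    ∀ᵐ ω ∂P, ∀ n : ℕ, ‖predictablePart (clipSum Y) ℱ P n ω - (n : ℝ) • μ‖ ≤ n * (Kp p * V) := by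
  filter_upwards [ae_all_iff.mpr hmean, ae_all_iff.mpr fun n ↦
    norm_condExp_clip_sub_condExp_le hp (hint n) (hmom n) (hV n)] with ω hω_mean hω n
  simp only [hω_mean] at hω
  calc ‖predictablePart (clipSum Y) ℱ P n ω - (n : ℝ) • μ‖
      = ‖∑ m ∈ Finset.range n, (P[fun ω ↦ clip (Y m ω) | ℱ m] ω - μ)‖ := by
        simp only [predictablePart, clipSum_succ_sub, Finset.sum_apply, Finset.sum_sub_distrib,
          Finset.sum_const, Finset.card_range, Nat.cast_smul_eq_nsmul]
    _ ≤ ∑ _ ∈ Finset.range n, Kp p * V := norm_sum_le_of_le _ fun m _ ↦ hω m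
    _ = n * (Kp p * V) := by rw [Finset.sum_const, Finset.card_range, nsmul_eq_mul]

variable [IsProbabilityMeasure P] {β δ : ℝ}

lemma IsTwoSmooth.ofReal_one_sub_le_measure_forall_norm_martingalePart_clipSum_le
    (h : IsTwoSmooth B β) (hβ : 1 ≤ β) (hp0 : 0 ≤ p) (hp2 : p ≤ 2)
    (hY : ∀ n, StronglyMeasurable[ℱ (n + 1)] (Y n))
    (hmom : ∀ n, Integrable (fun ω ↦ ‖Y n ω‖ ^ p) P)
    (hV : ∀ n, ∀ᵐ ω ∂P, (P[fun ω ↦ ‖Y n ω‖ ^ p | ℱ n]) ω ≤ V) (hδ : 0 < δ) :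
    ENNReal.ofReal (1 - δ) ≤ P {ω | ∀ n : ℕ, ‖martingalePart (clipSum Y) ℱ P n ω‖ ≤
      β * (n * (coshRate β 2 * (4 * V)) + Real.log (2 / δ))} := by
  have hY_meas : ∀ n, AEStronglyMeasurable (Y n) P := fun n ↦
    ((hY n).mono (ℱ.le _)).aestronglyMeasurable
  refine h.ofReal_one_sub_le_measure_forall_norm_martingale_le hβ two_pos
    (martingale_martingalePart (stronglyAdapted_clipSum hY) (integrable_clipSum hY_meas))
    martingalePart_clipSum_zero (fun n ↦ ?_) (fun n ↦ ?_) hδ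
  all_goals simp only [martingalePart_clipSum_succ_sub]
  · exact norm_clip_sub_condExp_clip_le
  · exact condExp_norm_clip_sub_condExp_sq_le (ℱ.le n) hp0 hp2 (hY_meas n) (hmom n) (hV n)

theorem IsTwoSmooth.ofReal_one_sub_le_measure_forall_norm_clipSum_sub_le
    (h : IsTwoSmooth B β) (hβ : 1 ≤ β) (hp1 : 1 < p) (hp2 : p ≤ 2)
    (hY : ∀ n, StronglyMeasurable[ℱ (n + 1)] (Y n)) (hint : ∀ n, Integrable (Y n) P)
    (hmom : ∀ n, Integrable (fun ω ↦ ‖Y n ω‖ ^ p) P)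
    (hmean : ∀ n, P[Y n | ℱ n] =ᵐ[P] fun _ ↦ μ)
    (hV : ∀ n, ∀ᵐ ω ∂P, (P[fun ω ↦ ‖Y n ω‖ ^ p | ℱ n]) ω ≤ V) (hδ : 0 < δ) :
    ENNReal.ofReal (1 - δ) ≤ P {ω | ∀ n : ℕ, ‖clipSum Y n ω - (n : ℝ) • μ‖ ≤
      n * (V * (3 * β + 2 + Kp p)) + β * Real.log (2 / δ)} := by
  have hV0 : 0 ≤ V := by
    have hnonneg : ∀ᵐ ω ∂P, 0 ≤ P[fun ω ↦ ‖Y 0 ω‖ ^ p | ℱ 0] ω :=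
      condExp_nonneg (.of_forall fun ω ↦ by positivity)
    obtain ⟨ω, hω, hωV⟩ := (hnonneg.and (hV 0)).exists
    exact hω.trans hωV
  refine (h.ofReal_one_sub_le_measure_forall_norm_martingalePart_clipSum_le hβ
    (by linarith) hp2 hY hmom hV hδ).trans (measure_mono_ae ?_)
  filter_upwards [norm_predictablePart_clipSum_sub_le hp1 hint hmom hmean hV]
    with ω hpredictable hmartingale n
  calc ‖clipSum Y n ω - (n : ℝ) • μ‖
      = ‖martingalePart (clipSum Y) ℱ P n ω
          + (predictablePart (clipSum Y) ℱ P n ω - (n : ℝ) • μ)‖ := by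
        rw [martingalePart, Pi.sub_apply, sub_add_sub_cancel]
    _ ≤ β * (n * (coshRate β 2 * (4 * V)) + Real.log (2 / δ)) + n * (Kp p * V) :=
        norm_add_le_of_le (hmartingale n) (hpredictable n)
    _ = n * V * (β * coshRate β 2 * 4) + β * Real.log (2 / δ) + n * (Kp p * V) := by ring
    _ ≤ n * V * (3 * β + 2) + β * Real.log (2 / δ) + n * (Kp p * V) := by
        gcongr
        exact mul_coshRate_two_le (by linarith)
    _ = n * (V * (3 * β + 2 + Kp p)) + β * Real.log (2 / δ) := by ring

end ClipSum

section TruncatedMean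

variable {B : Type*} [NormedAddCommGroup B] [NormedSpace ℝ B]

lemma norm_inv_smul_sum_truncB_smul_sub {n : ℕ} (hn : n ≠ 0) {lam : ℝ} (hlam : 0 < lam)
    (x : ℕ → B) (μ : B) :
    ‖(n : ℝ)⁻¹ • (∑ m ∈ Finset.range n, truncB (lam • x m) • x m) - μ‖ =
      ‖(∑ m ∈ Finset.range n, clip (lam • x m)) - (n : ℝ) • lam • μ‖ / (lam * n) := by
  have hn' : (0 : ℝ) < n := Nat.cast_pos.mpr hn.pos
  have hscale : (∑ m ∈ Finset.range n, clip (lam • x m)) - (n : ℝ) • lam • μ =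
      (lam * n) • ((n : ℝ)⁻¹ • (∑ m ∈ Finset.range n, truncB (lam • x m) • x m) - μ) := by
    simp only [clip, smul_comm _ lam, ← Finset.smul_sum, smul_sub, mul_smul,
      smul_inv_smul₀ hn'.ne']
  rw [hscale, norm_smul, Real.norm_of_nonneg (by positivity),
    mul_div_cancel_left₀ _ (by positivity)]

variable {p : ℝ}

lemma norm_smul_rpow {lam : ℝ} (hlam : 0 ≤ lam) (x : B) : ‖lam • x‖ ^ p = lam ^ p * ‖x‖ ^ p := by
  rw [norm_smul, Real.norm_of_nonneg hlam, Real.mul_rpow hlam (norm_nonneg x)]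

lemma condExp_norm_smul_rpow_le {Ω : Type*} {m mΩ : MeasurableSpace Ω} {P : Measure Ω} {X : Ω → B}
    {lam v : ℝ} (hlam : 0 ≤ lam) (hv : ∀ᵐ ω ∂P, P[fun ω ↦ ‖X ω‖ ^ p | m] ω ≤ v) :
    ∀ᵐ ω ∂P, P[fun ω ↦ ‖lam • X ω‖ ^ p | m] ω ≤ lam ^ p * v := by
  simp only [norm_smul_rpow hlam]
  filter_upwards [condExp_smul (μ := P) (lam ^ p) (fun ω ↦ ‖X ω‖ ^ p) m, hv] with ω hsmul hω
  refine hsmul.trans_le ?_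
  rw [Pi.smul_apply, smul_eq_mul]
  gcongr

end TruncatedMean

theorem stmt15_general
    {B : Type*} [NormedAddCommGroup B] [NormedSpace ℝ B] [CompleteSpace B]
    {Ω : Type*} {mΩ : MeasurableSpace Ω} {P : Measure Ω} [IsProbabilityMeasure P]
    (β : ℝ) (hβ : 1 ≤ β)
    (hsmooth : ∀ x y : B, ‖x + y‖ ^ 2 + ‖x - y‖ ^ 2 ≤ 2 * ‖x‖ ^ 2 + 2 * β ^ 2 * ‖y‖ ^ 2)
    (ℱ : Filtration ℕ mΩ) (X : ℕ → Ω → B) (μ : B) (p v : ℝ)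
    (hp1 : 1 < p) (hp2 : p ≤ 2)
    (hadapted : ∀ n : ℕ, 1 ≤ n → StronglyMeasurable[ℱ n] (X n))
    (hint : ∀ n : ℕ, 1 ≤ n → Integrable (X n) P)
    (hmom : ∀ n : ℕ, 1 ≤ n → Integrable (fun ω => ‖X n ω‖ ^ p) P)
    (hcondmean : ∀ n : ℕ, P[X (n + 1) | ℱ n] =ᵐ[P] fun _ => μ)
    (hcondmom : ∀ n : ℕ, ∀ᵐ ω ∂P, (P[fun ω' => ‖X (n + 1) ω'‖ ^ p | ℱ n]) ω ≤ v)
    (δ : ℝ) (hδ : 0 < δ) (lam : ℝ) (hlam : 0 < lam) :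
    ENNReal.ofReal (1 - δ) ≤
      P {ω | ∀ n : ℕ, 1 ≤ n →
        ‖(n : ℝ)⁻¹ • (∑ m ∈ Finset.range n, truncB (lam • X (m + 1) ω) • X (m + 1) ω) - μ‖ ≤
          v * lam ^ (p - 1) * (3 * β + 2 + Kp p) + β * Real.log (2 / δ) / (lam * n)} := by
  have hmean (n : ℕ) : P[lam • X (n + 1) | ℱ n] =ᵐ[P] fun _ ↦ lam • μ := by
    filter_upwards [condExp_smul (μ := P) lam (X (n + 1)) (ℱ n), hcondmean n] with ω hsmul hω
    rw [hsmul, Pi.smul_apply, hω]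
  have hmom_smul (n : ℕ) : Integrable (fun ω ↦ ‖lam • X (n + 1) ω‖ ^ p) P := by
    simpa only [norm_smul_rpow hlam.le] using (hmom _ n.succ_pos).const_mul (lam ^ p)
  refine (IsTwoSmooth.ofReal_one_sub_le_measure_forall_norm_clipSum_sub_le
    (Y := fun n ↦ lam • X (n + 1)) hsmooth hβ hp1 hp2
    (fun n ↦ (hadapted _ n.succ_pos).const_smul lam) (fun n ↦ (hint _ n.succ_pos).smul lam)
    hmom_smul hmean (fun n ↦ condExp_norm_smul_rpow_le hlam.le (hcondmom n)) hδ).trans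
    (measure_mono fun ω hω n hn ↦ ?_)
  have : (0 : ℝ) < n := Nat.cast_pos.mpr hn
  rw [norm_inv_smul_sum_truncB_smul_sub (Nat.ne_of_gt hn) hlam, div_le_iff₀ (by positivity)]
  refine (hω n).trans_eq ?_
  rw [Real.rpow_sub_one hlam.ne']
  field_simp

/-- **Line-crossing inequality under a raw (uncentered) `p`-th moment bound.** For the
uncentered truncated mean `μ̂ₙ = n⁻¹∑_{m≤n} Trunc(λXₘ)Xₘ`, for every `δ ∈ (0,1]` and
`λ > 0`, with probability at least `1 - δ`, simultaneously for all `n ≥ 1`,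
`‖μ̂ₙ - μ‖ ≤ 2vλ^{p-1}(β𝔠_p + K_p2^{p-1}) + β log(2/δ)/(λn)`. -/
theorem stmt15
    {B : Type*} [NormedAddCommGroup B] [NormedSpace ℝ B] [CompleteSpace B]
    [TopologicalSpace.SeparableSpace B]
    {Ω : Type*} {mΩ : MeasurableSpace Ω} {P : Measure Ω} [IsProbabilityMeasure P]
    (β : ℝ) (hβ : 1 ≤ β)
    (hsmooth : ∀ x y : B, ‖x + y‖ ^ 2 + ‖x - y‖ ^ 2 ≤ 2 * ‖x‖ ^ 2 + 2 * β ^ 2 * ‖y‖ ^ 2)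
    (ℱ : Filtration ℕ mΩ) (X : ℕ → Ω → B) (μ : B) (p v : ℝ)
    (hp1 : 1 < p) (hp2 : p ≤ 2) (hv : 0 < v)
    (hadapted : ∀ n : ℕ, 1 ≤ n → StronglyMeasurable[ℱ n] (X n))
    (hint : ∀ n : ℕ, 1 ≤ n → Integrable (X n) P)
    (hmom : ∀ n : ℕ, 1 ≤ n → Integrable (fun ω => ‖X n ω‖ ^ p) P)
    (hcondmean : ∀ n : ℕ, P[X (n + 1) | ℱ n] =ᵐ[P] fun _ => μ)
    (hcondmom : ∀ n : ℕ, ∀ᵐ ω ∂P, (P[fun ω' => ‖X (n + 1) ω'‖ ^ p | ℱ n]) ω ≤ v)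
    (δ : ℝ) (hδ : δ ∈ Set.Ioc (0 : ℝ) 1) (lam : ℝ) (hlam : 0 < lam) :
    ENNReal.ofReal (1 - δ) ≤
      P {ω | ∀ n : ℕ, 1 ≤ n →
        ‖(n : ℝ)⁻¹ • (∑ m ∈ Finset.range n, truncB (lam • X (m + 1) ω) • X (m + 1) ω) - μ‖ ≤
          2 * v * lam ^ (p - 1) * (β * frakC p (1 / β) + Kp p * 2 ^ (p - 1))
            + β * Real.log (2 / δ) / (lam * n)} := by
  refine (stmt15_general β hβ hsmooth ℱ X μ p v hp1 hp2 hadapted hint hmom hcondmean hcondmom δ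
    hδ.1 lam hlam).trans (measure_mono fun ω hω n hn ↦ (hω n hn).trans ?_)
  linarith [mul_le_mul_of_nonneg_left (three_mul_add_two_add_Kp_le hp1.le (by linarith : 0 < β))
    (by positivity : 0 ≤ v * lam ^ (p - 1))]
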